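/- There exists a function C : ℝ × ℝ → ℝ such that for every T > 0 and every smooth solution u of the 1-dimensional Schrödinger flow with Neumann boundary conditions on [0,T] with initial data u₀ = u(·,0), one has sup_{t ∈ [0,T]} ( ‖u(·,t)‖²_{H³} + ‖∂_t u(·,t)‖²_{H¹} ) ≤ C(‖u₀‖_{H³}, T). -/

import Mathlib

open MeasureTheory Set

noncomputable section

abbrev E3 := EuclideanSpace ℝ (Fin 3)

/-- The cross product on `EuclideanSpace ℝ (Fin 3)`. -/
def cross3 (a b : E3) : E3 :=
  (WithLp.equiv 2 (Fin 3 → ℝ)).symm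
    (crossProduct ((WithLp.equiv 2 (Fin 3 → ℝ)) a) ((WithLp.equiv 2 (Fin 3 → ℝ)) b))

/-- Partial derivative in the space variable of `u = u x t`. -/
def pdx (u : ℝ → ℝ → E3) : ℝ → ℝ → E3 := fun x t => deriv (fun y => u y t) x

/-- Partial derivative in the time variable of `u = u x t`. -/
def pdt (u : ℝ → ℝ → E3) : ℝ → ℝ → E3 := fun x t => deriv (fun s => u x s) t

/-- `u` is a smooth solution of the 1-dimensional Schrödinger flow with Neumann
boundary conditions on `[0,1] × [0,T]`. -/
def IsSol (T : ℝ) (u : ℝ → ℝ → E3) : Prop :=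
  ContDiff ℝ (⊤ : ℕ∞) (fun p : ℝ × ℝ => u p.1 p.2) ∧
  (∀ x ∈ Icc (0:ℝ) 1, ∀ t ∈ Icc (0:ℝ) T, ‖u x t‖ = 1) ∧
  (∀ x ∈ Icc (0:ℝ) 1, ∀ t ∈ Icc (0:ℝ) T, pdt u x t = cross3 (u x t) (pdx (pdx u) x t)) ∧
  (∀ t ∈ Icc (0:ℝ) T, pdx u 0 t = 0 ∧ pdx u 1 t = 0)

/-- Squared `L²` norm on `[0,1]`. -/
def L2sq (f : ℝ → E3) : ℝ := ∫ x in (0:ℝ)..1, ‖f x‖ ^ 2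

/-- Squared `H^k` Sobolev norm on `[0,1]`. -/
def Hsq (k : ℕ) (f : ℝ → E3) : ℝ :=
  ∑ j ∈ Finset.range (k + 1), ∫ x in (0:ℝ)..1, ‖deriv^[j] f x‖ ^ 2

/-! ### Calculus of smooth functions of two variables -/

def DX {F : Type} [NormedAddCommGroup F] [NormedSpace ℝ F] (u : ℝ → ℝ → F) : ℝ → ℝ → F :=
  fun x t => deriv (fun y => u y t) x

def DT {F : Type} [NormedAddCommGroup F] [NormedSpace ℝ F] (u : ℝ → ℝ → F) : ℝ → ℝ → F :=
  fun x t => deriv (fun s => u x s) t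

def Sm {F : Type} [NormedAddCommGroup F] [NormedSpace ℝ F] (u : ℝ → ℝ → F) : Prop :=
  ContDiff ℝ (⊤ : ℕ∞) (fun p : ℝ × ℝ => u p.1 p.2)

section calculus
variable {F : Type} [NormedAddCommGroup F] [NormedSpace ℝ F]

lemma Sm.hasX {f : ℝ → ℝ → F} (hf : Sm f) (x t : ℝ) :
    HasDerivAt (fun y => f y t) (fderiv ℝ (fun p : ℝ × ℝ => f p.1 p.2) (x, t) (1, 0)) x := by
  have h1 : HasFDerivAt (fun p : ℝ × ℝ => f p.1 p.2)
      (fderiv ℝ (fun p : ℝ × ℝ => f p.1 p.2) (x, t)) (x, t) :=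
    (ContDiff.differentiable hf (by simp) (x, t)).hasFDerivAt
  have h2 : HasDerivAt (fun y : ℝ => (y, t)) ((1 : ℝ), (0 : ℝ)) x :=
    (hasDerivAt_id x).prodMk (hasDerivAt_const x t)
  exact h1.comp_hasDerivAt x h2

lemma Sm.hasT {f : ℝ → ℝ → F} (hf : Sm f) (x t : ℝ) :
    HasDerivAt (fun s => f x s) (fderiv ℝ (fun p : ℝ × ℝ => f p.1 p.2) (x, t) (0, 1)) t := by
  have h1 : HasFDerivAt (fun p : ℝ × ℝ => f p.1 p.2)
      (fderiv ℝ (fun p : ℝ × ℝ => f p.1 p.2) (x, t)) (x, t) :=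
    (ContDiff.differentiable hf (by simp) (x, t)).hasFDerivAt
  have h2 : HasDerivAt (fun s : ℝ => (x, s)) ((0 : ℝ), (1 : ℝ)) t :=
    (hasDerivAt_const t x).prodMk (hasDerivAt_id t)
  exact h1.comp_hasDerivAt t h2

lemma Sm.DX_eq {f : ℝ → ℝ → F} (hf : Sm f) (x t : ℝ) :
    DX f x t = fderiv ℝ (fun p : ℝ × ℝ => f p.1 p.2) (x, t) (1, 0) := (hf.hasX x t).deriv

lemma Sm.DT_eq {f : ℝ → ℝ → F} (hf : Sm f) (x t : ℝ) :
    DT f x t = fderiv ℝ (fun p : ℝ × ℝ => f p.1 p.2) (x, t) (0, 1) := (hf.hasT x t).deriv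

lemma Sm.dX {f : ℝ → ℝ → F} (hf : Sm f) (x t : ℝ) :
    HasDerivAt (fun y => f y t) (DX f x t) x := by
  rw [hf.DX_eq]; exact hf.hasX x t

lemma Sm.dT {f : ℝ → ℝ → F} (hf : Sm f) (x t : ℝ) :
    HasDerivAt (fun s => f x s) (DT f x t) t := by
  rw [hf.DT_eq]; exact hf.hasT x t

lemma Sm.smX {f : ℝ → ℝ → F} (hf : Sm f) : Sm (DX f) := by
  have : (fun p : ℝ × ℝ => DX f p.1 p.2) =
      fun p => fderiv ℝ (fun p : ℝ × ℝ => f p.1 p.2) p (1, 0) := by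
    funext p; exact hf.DX_eq p.1 p.2
  unfold Sm
  rw [this]
  exact (ContDiff.fderiv_right hf (m := (⊤ : ℕ∞)) (by simp)).clm_apply contDiff_const

lemma Sm.smT {f : ℝ → ℝ → F} (hf : Sm f) : Sm (DT f) := by
  have : (fun p : ℝ × ℝ => DT f p.1 p.2) =
      fun p => fderiv ℝ (fun p : ℝ × ℝ => f p.1 p.2) p (0, 1) := by
    funext p; exact hf.DT_eq p.1 p.2
  unfold Sm
  rw [this]
  exact (ContDiff.fderiv_right hf (m := (⊤ : ℕ∞)) (by simp)).clm_apply contDiff_const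

lemma Sm.comm {f : ℝ → ℝ → F} (hf : Sm f) : DT (DX f) = DX (DT f) := by
  funext x t
  rw [hf.smX.DT_eq, hf.smT.DX_eq]
  have e1 : (fun p : ℝ × ℝ => DX f p.1 p.2) =
      fun p => fderiv ℝ (fun p : ℝ × ℝ => f p.1 p.2) p (1, 0) := by
    funext p; exact hf.DX_eq p.1 p.2
  have e2 : (fun p : ℝ × ℝ => DT f p.1 p.2) =
      fun p => fderiv ℝ (fun p : ℝ × ℝ => f p.1 p.2) p (0, 1) := by
    funext p; exact hf.DT_eq p.1 p.2
  have hd : DifferentiableAt ℝ (fderiv ℝ (fun p : ℝ × ℝ => f p.1 p.2)) (x, t) :=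
    (ContDiff.fderiv_right hf (m := (⊤ : ℕ∞)) (by simp)).differentiable (by simp) (x, t)
  rw [e1, e2, fderiv_clm_apply hd (differentiableAt_const _),
    fderiv_clm_apply hd (differentiableAt_const _)]
  have hs : IsSymmSndFDerivAt ℝ (fun p : ℝ × ℝ => f p.1 p.2) (x, t) :=
    (ContDiff.contDiffAt hf).isSymmSndFDerivAt (by
      simp only [minSmoothness_of_isRCLikeNormedField]; exact WithTop.coe_le_coe.2 (le_top : (2 : ℕ∞) ≤ ⊤))
  simpa using hs.eq (0, 1) (1, 0)

lemma Sm.contX {f : ℝ → ℝ → F} (hf : Sm f) (t : ℝ) : Continuous (fun x => f x t) :=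
  (ContDiff.continuous hf).comp (by fun_prop : Continuous fun x : ℝ => (x, t))

lemma Sm.contT {f : ℝ → ℝ → F} (hf : Sm f) (x : ℝ) : Continuous (fun t => f x t) :=
  (ContDiff.continuous hf).comp (by fun_prop : Continuous fun t : ℝ => (x, t))

lemma DX_congr {f g : ℝ → ℝ → F} (hf : Sm f) (hg : Sm g) {t : ℝ}
    (h : ∀ x ∈ Icc (0:ℝ) 1, f x t = g x t) :
    ∀ x ∈ Icc (0:ℝ) 1, DX f x t = DX g x t := by
  intro x hx
  have hu : UniqueDiffWithinAt ℝ (Icc (0:ℝ) 1) x := uniqueDiffOn_Icc one_pos x hx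
  have h1 := (hf.dX x t).hasDerivWithinAt (s := Icc (0:ℝ) 1)
  have h2 := (hg.dX x t).hasDerivWithinAt (s := Icc (0:ℝ) 1)
  exact hu.eq_deriv _ h1 (h2.congr (fun y hy => h y hy) (h x hx))

lemma DT_congr {f g : ℝ → ℝ → F} (hf : Sm f) (hg : Sm g) {x T : ℝ} (hT : 0 < T)
    (h : ∀ t ∈ Icc (0:ℝ) T, f x t = g x t) :
    ∀ t ∈ Icc (0:ℝ) T, DT f x t = DT g x t := by
  intro t ht
  have hu : UniqueDiffWithinAt ℝ (Icc (0:ℝ) T) t := uniqueDiffOn_Icc hT t ht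
  have h1 := (hf.dT x t).hasDerivWithinAt (s := Icc (0:ℝ) T)
  have h2 := (hg.dT x t).hasDerivWithinAt (s := Icc (0:ℝ) T)
  exact hu.eq_deriv _ h1 (h2.congr (fun y hy => h y hy) (h t ht))

end calculus

lemma Sm.hasDerivAt_integral {G : ℝ → ℝ → ℝ} (hG : Sm G) (t : ℝ) :
    HasDerivAt (fun t => ∫ x in (0:ℝ)..1, G x t) (∫ x in (0:ℝ)..1, DT G x t) t := by
  have hc : Continuous (fun p : ℝ × ℝ => DT G p.1 p.2) := ContDiff.continuous hG.smT
  obtain ⟨B, hB⟩ := (isCompact_Icc (a := ((0:ℝ), t - 1)) (b := ((1:ℝ), t + 1))).exists_bound_of_continuousOn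
    hc.continuousOn
  refine (intervalIntegral.hasDerivAt_integral_of_dominated_loc_of_deriv_le
    (F := fun s x => G x s) (F' := fun s x => DT G x s) (bound := fun _ => B)
    (s := Icc (t - 1) (t + 1)) (Icc_mem_nhds (by linarith) (by linarith)) ?_ ?_ ?_ ?_ ?_ ?_).2
  · exact Filter.Eventually.of_forall fun s => (hG.contX s).aestronglyMeasurable
  · exact (hG.contX t).intervalIntegrable _ _
  · exact (hG.smT.contX t).aestronglyMeasurable
  · refine Filter.Eventually.of_forall fun x hx s hs => ?_
    rw [uIoc_of_le zero_le_one] at hx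
    exact hB (x, s) ⟨⟨hx.1.le, hs.1⟩, ⟨hx.2, hs.2⟩⟩
  · exact intervalIntegrable_const
  · exact Filter.Eventually.of_forall fun x _ s _ => hG.dT x s

/-- Integrated balance law. -/
lemma balance {G H S : ℝ → ℝ → ℝ} (hG : Sm G) (hH : Sm H) (hS : Sm S) {t : ℝ}
    (h : ∀ x ∈ Icc (0:ℝ) 1, DT G x t = DX H x t + S x t) (h0 : H 0 t = 0) (h1 : H 1 t = 0) :
    HasDerivAt (fun t => ∫ x in (0:ℝ)..1, G x t) (∫ x in (0:ℝ)..1, S x t) t := by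
  have e : ∫ x in (0:ℝ)..1, DT G x t = ∫ x in (0:ℝ)..1, S x t := by
    rw [intervalIntegral.integral_congr (g := fun x => DX H x t + S x t)]
    · rw [intervalIntegral.integral_add ((hH.smX.contX t).intervalIntegrable _ _)
        ((hS.contX t).intervalIntegrable _ _),
        intervalIntegral.integral_eq_sub_of_hasDerivAt (f := fun x => H x t)
        (fun x _ => hH.dX x t) ((hH.smX.contX t).intervalIntegrable _ _), h0, h1]
      simp
    · intro x hx
      rw [uIcc_of_le zero_le_one] at hx
      exact h x hx
  rw [← e]; exact hG.hasDerivAt_integral t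

lemma Sm.const {c : ℝ} : Sm (fun _ _ => c) := contDiff_const

lemma Sm.inner {f g : ℝ → ℝ → E3} (hf : Sm f) (hg : Sm g) :
    Sm (fun x t => inner ℝ (f x t) (g x t)) := ContDiff.inner ℝ hf hg

lemma Sm.mul {f g : ℝ → ℝ → ℝ} (hf : Sm f) (hg : Sm g) :
    Sm (fun x t => f x t * g x t) := ContDiff.mul hf hg

lemma Sm.sub {f g : ℝ → ℝ → ℝ} (hf : Sm f) (hg : Sm g) :
    Sm (fun x t => f x t - g x t) := ContDiff.sub hf hg

/-! ### Cross product algebra -/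

@[simp] lemma cross3_0 (a b : E3) : cross3 a b 0 = a 1 * b 2 - a 2 * b 1 := by
  simp [cross3, crossProduct]
@[simp] lemma cross3_1 (a b : E3) : cross3 a b 1 = a 2 * b 0 - a 0 * b 2 := by
  simp [cross3, crossProduct]
@[simp] lemma cross3_2 (a b : E3) : cross3 a b 2 = a 0 * b 1 - a 1 * b 0 := by
  simp [cross3, crossProduct]

lemma inner3 (a b : E3) : inner ℝ a b = a 0 * b 0 + a 1 * b 1 + a 2 * b 2 := by
  simp [PiLp.inner_apply, Fin.sum_univ_three]; ring

lemma Sm.cross {f g : ℝ → ℝ → E3} (hf : Sm f) (hg : Sm g) :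
    Sm (fun x t => cross3 (f x t) (g x t)) := by
  unfold Sm at *
  rw [contDiff_euclidean] at *
  intro i
  fin_cases i
  · simpa using ((hf 1).mul (hg 2)).sub ((hf 2).mul (hg 1))
  · simpa using ((hf 2).mul (hg 0)).sub ((hf 0).mul (hg 2))
  · simpa using ((hf 0).mul (hg 1)).sub ((hf 1).mul (hg 0))

lemma hasDerivAt_e3 {f : ℝ → E3} {f' : E3} {x : ℝ} :
    HasDerivAt f f' x ↔ ∀ i, HasDerivAt (fun y => f y i) (f' i) x := by
  constructor
  · intro h i
    exact ((EuclideanSpace.proj (𝕜 := ℝ) i : E3 →L[ℝ] ℝ).hasFDerivAt.comp_hasDerivAt x h)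
  · intro h
    have h1 : HasDerivAt (fun y => (f y).ofLp) f'.ofLp x := hasDerivAt_pi.2 h
    exact ((EuclideanSpace.equiv (Fin 3) ℝ).symm : (Fin 3 → ℝ) →L[ℝ] E3).hasFDerivAt.comp_hasDerivAt x h1

lemma hasDerivAt_cross {f g : ℝ → E3} {f' g' : E3} {x : ℝ}
    (hf : HasDerivAt f f' x) (hg : HasDerivAt g g' x) :
    HasDerivAt (fun y => cross3 (f y) (g y)) (cross3 f' (g x) + cross3 (f x) g') x := by
  rw [hasDerivAt_e3] at *
  have h0 : HasDerivAt (fun y => cross3 (f y) (g y) 0)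
      ((cross3 f' (g x) + cross3 (f x) g') 0) x := by
    simp only [cross3_0, PiLp.add_apply]
    exact (((hf 1).mul (hg 2)).sub ((hf 2).mul (hg 1))).congr_deriv (by ring)
  have h1 : HasDerivAt (fun y => cross3 (f y) (g y) 1)
      ((cross3 f' (g x) + cross3 (f x) g') 1) x := by
    simp only [cross3_1, PiLp.add_apply]
    exact (((hf 2).mul (hg 0)).sub ((hf 0).mul (hg 2))).congr_deriv (by ring)
  have h2 : HasDerivAt (fun y => cross3 (f y) (g y) 2)
      ((cross3 f' (g x) + cross3 (f x) g') 2) x := by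
    simp only [cross3_2, PiLp.add_apply]
    exact (((hf 0).mul (hg 1)).sub ((hf 1).mul (hg 0))).congr_deriv (by ring)
  intro i
  fin_cases i
  exacts [h0, h1, h2]

lemma normsq_cross (a b : E3) :
    ‖cross3 a b‖ ^ 2 = ‖a‖ ^ 2 * ‖b‖ ^ 2 - (inner ℝ a b) ^ 2 := by
  simp only [← real_inner_self_eq_norm_sq, inner3, cross3_0, cross3_1, cross3_2]; ring

lemma norm_cross_le (a b : E3) : ‖cross3 a b‖ ≤ ‖a‖ * ‖b‖ := by
  have h := normsq_cross a b
  refine abs_le_of_sq_le_sq' (a := ‖cross3 a b‖) ?_ (by positivity) |>.2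
  nlinarith [sq_nonneg (inner ℝ a b : ℝ)]

lemma Sm.add {F : Type} [NormedAddCommGroup F] [NormedSpace ℝ F] {f g : ℝ → ℝ → F}
    (hf : Sm f) (hg : Sm g) : Sm (fun x t => f x t + g x t) := ContDiff.add hf hg

lemma DX_inner {f g : ℝ → ℝ → E3} (hf : Sm f) (hg : Sm g) (x t : ℝ) :
    DX (fun x t => inner ℝ (f x t) (g x t)) x t
      = inner ℝ (f x t) (DX g x t) + inner ℝ (DX f x t) (g x t) :=
  ((hf.dX x t).inner ℝ (hg.dX x t)).deriv

lemma DT_inner {f g : ℝ → ℝ → E3} (hf : Sm f) (hg : Sm g) (x t : ℝ) :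
    DT (fun x t => inner ℝ (f x t) (g x t)) x t
      = inner ℝ (f x t) (DT g x t) + inner ℝ (DT f x t) (g x t) :=
  ((hf.dT x t).inner ℝ (hg.dT x t)).deriv

lemma DX_cross {f g : ℝ → ℝ → E3} (hf : Sm f) (hg : Sm g) (x t : ℝ) :
    DX (fun x t => cross3 (f x t) (g x t)) x t
      = cross3 (DX f x t) (g x t) + cross3 (f x t) (DX g x t) :=
  (hasDerivAt_cross (hf.dX x t) (hg.dX x t)).deriv

lemma DT_cross {f g : ℝ → ℝ → E3} (hf : Sm f) (hg : Sm g) (x t : ℝ) :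
    DT (fun x t => cross3 (f x t) (g x t)) x t
      = cross3 (DT f x t) (g x t) + cross3 (f x t) (DT g x t) :=
  (hasDerivAt_cross (hf.dT x t) (hg.dT x t)).deriv

lemma DX_add {F : Type} [NormedAddCommGroup F] [NormedSpace ℝ F] {f g : ℝ → ℝ → F}
    (hf : Sm f) (hg : Sm g) (x t : ℝ) :
    DX (fun x t => f x t + g x t) x t = DX f x t + DX g x t :=
  ((hf.dX x t).add (hg.dX x t)).deriv

lemma DX_sub {f g : ℝ → ℝ → ℝ}
    (hf : Sm f) (hg : Sm g) (x t : ℝ) :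
    DX (fun x t => f x t - g x t) x t = DX f x t - DX g x t :=
  ((hf.dX x t).sub (hg.dX x t)).deriv

lemma DT_sub {f g : ℝ → ℝ → ℝ}
    (hf : Sm f) (hg : Sm g) (x t : ℝ) :
    DT (fun x t => f x t - g x t) x t = DT f x t - DT g x t :=
  ((hf.dT x t).sub (hg.dT x t)).deriv

lemma DX_mul {f g : ℝ → ℝ → ℝ}
    (hf : Sm f) (hg : Sm g) (x t : ℝ) :
    DX (fun x t => f x t * g x t) x t = DX f x t * g x t + f x t * DX g x t :=
  ((hf.dX x t).mul (hg.dX x t)).deriv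

lemma DT_mul {f g : ℝ → ℝ → ℝ}
    (hf : Sm f) (hg : Sm g) (x t : ℝ) :
    DT (fun x t => f x t * g x t) x t = DT f x t * g x t + f x t * DT g x t :=
  ((hf.dT x t).mul (hg.dT x t)).deriv

lemma DX_const (c : ℝ) (x t : ℝ) : DX (fun _ _ => c) x t = 0 := by simp [DX]
lemma DT_const (c : ℝ) (x t : ℝ) : DT (fun _ _ => c) x t = 0 := by simp [DT]

/-! ### Pointwise facts about solutions -/

section facts
variable {T : ℝ} {u : ℝ → ℝ → E3}

lemma IsSol.sm (h : IsSol T u) : Sm u := h.1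

lemma IsSol.uu (h : IsSol T u) {x t : ℝ} (hx : x ∈ Icc (0:ℝ) 1) (ht : t ∈ Icc (0:ℝ) T) :
    inner ℝ (u x t) (u x t) = 1 := by
  rw [real_inner_self_eq_norm_sq, h.2.1 x hx t ht]; norm_num

lemma IsSol.up (h : IsSol T u) {x t : ℝ} (hx : x ∈ Icc (0:ℝ) 1) (ht : t ∈ Icc (0:ℝ) T) :
    inner ℝ (u x t) (DX u x t) = 0 := by
  have := DX_congr (h.sm.inner h.sm) (Sm.const (c := 1)) (fun x hx => h.uu hx ht) x hx
  rw [DX_inner h.sm h.sm, DX_const, real_inner_comm (u x t)] at this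
  linarith

lemma IsSol.uq (h : IsSol T u) {x t : ℝ} (hx : x ∈ Icc (0:ℝ) 1) (ht : t ∈ Icc (0:ℝ) T) :
    inner ℝ (u x t) (DX (DX u) x t) + inner ℝ (DX u x t) (DX u x t) = 0 := by
  have := DX_congr (h.sm.inner h.sm.smX) (Sm.const (c := 0)) (fun x hx => h.up hx ht) x hx
  rwa [DX_inner h.sm h.sm.smX, DX_const] at this

lemma IsSol.ur (h : IsSol T u) {x t : ℝ} (hx : x ∈ Icc (0:ℝ) 1) (ht : t ∈ Icc (0:ℝ) T) :
    inner ℝ (u x t) (DX (DX (DX u)) x t) = -3 * inner ℝ (DX u x t) (DX (DX u) x t) := by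
  have := DX_congr ((h.sm.inner h.sm.smX.smX).add (h.sm.smX.inner h.sm.smX))
    (Sm.const (c := 0)) (fun x hx => h.uq hx ht) x hx
  rw [DX_add (h.sm.inner h.sm.smX.smX) (h.sm.smX.inner h.sm.smX), DX_inner h.sm h.sm.smX.smX,
    DX_inner h.sm.smX h.sm.smX, DX_const, real_inner_comm (DX u x t)] at this
  linarith

lemma IsSol.w (h : IsSol T u) {x t : ℝ} (hx : x ∈ Icc (0:ℝ) 1) (ht : t ∈ Icc (0:ℝ) T) :
    DT u x t = cross3 (u x t) (DX (DX u) x t) := h.2.2.1 x hx t ht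

lemma IsSol.uw (h : IsSol T u) {x t : ℝ} (hx : x ∈ Icc (0:ℝ) 1) (ht : t ∈ Icc (0:ℝ) T) :
    inner ℝ (u x t) (DT u x t) = 0 := by
  rw [h.w hx ht]; simp only [inner3, cross3_0, cross3_1, cross3_2]; ring

lemma IsSol.uwx (h : IsSol T u) {x t : ℝ} (hx : x ∈ Icc (0:ℝ) 1) (ht : t ∈ Icc (0:ℝ) T) :
    inner ℝ (u x t) (DX (DT u) x t) = - inner ℝ (DX u x t) (DT u x t) := by
  have := DX_congr (h.sm.inner h.sm.smT) (Sm.const (c := 0)) (fun x hx => h.uw hx ht) x hx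
  rw [DX_inner h.sm h.sm.smT, DX_const] at this
  linarith

lemma IsSol.wx (h : IsSol T u) {x t : ℝ} (hx : x ∈ Icc (0:ℝ) 1) (ht : t ∈ Icc (0:ℝ) T) :
    DX (DT u) x t = cross3 (DX u x t) (DX (DX u) x t) + cross3 (u x t) (DX (DX (DX u)) x t) := by
  rw [DX_congr h.sm.smT (h.sm.cross h.sm.smX.smX) (fun x hx => h.w hx ht) x hx,
    DX_cross h.sm h.sm.smX.smX]

lemma IsSol.comm2 (h : IsSol T u) : DT (DX (DX u)) = DX (DX (DT u)) := by
  rw [h.sm.smX.comm, h.sm.comm]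

lemma IsSol.wt (h : IsSol T u) (hT : 0 < T) {x t : ℝ} (hx : x ∈ Icc (0:ℝ) 1)
    (ht : t ∈ Icc (0:ℝ) T) :
    DT (DT u) x t = cross3 (DT u x t) (DX (DX u) x t) + cross3 (u x t) (DX (DX (DT u)) x t) := by
  rw [DT_congr h.sm.smT (h.sm.cross h.sm.smX.smX) hT (fun t ht => h.w hx ht) t ht,
    DT_cross h.sm h.sm.smX.smX, h.comm2]

lemma IsSol.wxt (h : IsSol T u) (hT : 0 < T) {x t : ℝ} (hx : x ∈ Icc (0:ℝ) 1)
    (ht : t ∈ Icc (0:ℝ) T) :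
    DT (DX (DT u)) x t = (cross3 (DX (DT u) x t) (DX (DX u) x t)
      + cross3 (DT u x t) (DX (DX (DX u)) x t)) + (cross3 (DX u x t) (DX (DX (DT u)) x t)
      + cross3 (u x t) (DX (DX (DX (DT u))) x t)) := by
  have a := h.sm.smT.cross h.sm.smX.smX
  have b := h.sm.cross h.sm.smT.smX.smX
  rw [h.sm.smT.comm, DX_congr h.sm.smT.smT (a.add b) (fun x hx => h.wt hT hx ht) x hx,
    DX_add a b, DX_cross h.sm.smT h.sm.smX.smX, DX_cross h.sm h.sm.smT.smX.smX]

lemma IsSol.wx_bdry (h : IsSol T u) (hT : 0 < T) {t : ℝ} (ht : t ∈ Icc (0:ℝ) T) :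
    DX (DT u) 0 t = 0 ∧ DX (DT u) 1 t = 0 := by
  rw [← h.sm.comm]
  have hz : Sm (fun _ _ => (0 : E3)) := contDiff_const
  have hd : ∀ x t, DT (fun _ _ => (0 : E3)) x t = 0 := by intro x t; simp [DT]
  constructor
  · rw [DT_congr h.sm.smX hz hT (fun t ht => (h.2.2.2 t ht).1) t ht, hd]
  · rw [DT_congr h.sm.smX hz hT (fun t ht => (h.2.2.2 t ht).2) t ht, hd]

lemma IsSol.p0 (h : IsSol T u) {t : ℝ} (ht : t ∈ Icc (0:ℝ) T) : DX u 0 t = 0 :=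
  (h.2.2.2 t ht).1
lemma IsSol.p1 (h : IsSol T u) {t : ℝ} (ht : t ∈ Icc (0:ℝ) T) : DX u 1 t = 0 :=
  (h.2.2.2 t ht).2

/-! ### Balance laws -/

lemma IsSol.bal1 (h : IsSol T u) {t : ℝ} (ht : t ∈ Icc (0:ℝ) T) :
    HasDerivAt (fun t => ∫ x in (0:ℝ)..1, ‖DX u x t‖ ^ 2) 0 t := by
  have hp := h.sm.smX
  have hw := h.sm.smT
  have c2 : Sm (fun _ _ => (2:ℝ)) := Sm.const
  have := balance (hp.inner hp) (c2.mul (hp.inner hw)) (Sm.const (c := 0)) (t := t) ?_ ?_ ?_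
  · simpa [real_inner_self_eq_norm_sq] using this
  · intro x hx
    rw [DT_inner hp hp, DX_mul c2 (hp.inner hw), DX_const, DX_inner hp hw, h.sm.comm]
    have : inner ℝ (DX (DX u) x t) (DT u x t) = 0 := by
      rw [h.w hx ht]; simp only [inner3, cross3_0, cross3_1, cross3_2]; ring
    rw [this, real_inner_comm (DX u x t)]; ring
  · simp [h.p0 ht]
  · simp [h.p1 ht]

lemma id1 (u q p y : E3) : inner ℝ (cross3 u q) (cross3 p y)
    = inner ℝ u p * inner ℝ q y - inner ℝ q p * inner ℝ u y := by
  simp only [inner3, cross3_0, cross3_1, cross3_2]; ring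

lemma id2 (a b : E3) : inner ℝ a (cross3 b a) = 0 := by
  simp only [inner3, cross3_0, cross3_1, cross3_2]; ring

lemma id3 (a b : E3) : inner ℝ a (cross3 a b) = 0 := by
  simp only [inner3, cross3_0, cross3_1, cross3_2]; ring

lemma IsSol.bal2 (h : IsSol T u) (hT : 0 < T) {t : ℝ} (ht : t ∈ Icc (0:ℝ) T) :
    HasDerivAt (fun t => ∫ x in (0:ℝ)..1, (‖DT u x t‖ ^ 2 - (1/4) * (‖DX u x t‖ ^ 2) ^ 2)) 0 t := by
  have hu := h.sm
  have hp := h.sm.smX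
  have hw := h.sm.smT
  have hwx := hw.smX
  have c2 : Sm (fun _ _ => (2:ℝ)) := Sm.const
  have c4 : Sm (fun _ _ => (1/4:ℝ)) := Sm.const
  have hpp := hp.inner hp
  have H1 := hw.inner (hu.cross hwx)
  have H2 := hpp.mul (hp.inner hw)
  have := balance ((hw.inner hw).sub (c4.mul (hpp.mul hpp)))
    ((c2.mul H1).sub H2) (Sm.const (c := 0)) (t := t) ?_ ?_ ?_
  · simpa [real_inner_self_eq_norm_sq, sq] using this
  · intro x hx
    rw [DT_sub (hw.inner hw) (c4.mul (hpp.mul hpp)), DT_mul c4 (hpp.mul hpp), DT_const,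
      DT_mul hpp hpp, DT_inner hw hw, DT_inner hp hp, DX_sub (c2.mul H1) H2, DX_mul c2 H1, DX_const,
      DX_mul hpp (hp.inner hw), DX_inner hp hp, DX_inner hp hw, DX_inner hw (hu.cross hwx),
      DX_cross hu hwx, h.sm.comm, h.wt hT hx ht]
    have e1 : inner ℝ (DX (DX u) x t) (DT u x t) = 0 := by
      rw [h.w hx ht]; exact id2 _ _
    have e2 : inner ℝ (DT u x t) (cross3 (DX u x t) (DX (DT u) x t))
        = inner ℝ (DX u x t) (DX (DX u) x t) * inner ℝ (DX u x t) (DT u x t) := by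
      conv_lhs => rw [h.w hx ht]
      rw [id1, h.up hx ht, h.uwx hx ht, real_inner_comm (DX u x t)]; ring
    simp only [inner_add_right, inner_add_left]
    rw [real_inner_comm (DT u x t) (cross3 (DT u x t) _),
      real_inner_comm (DT u x t) (cross3 (u x t) _), e1, e2, id2, id3,
      real_inner_comm (DX u x t) (DX (DT u) x t), real_inner_comm (DX u x t) (DX (DX u) x t)]
    ring
  · simp [h.p0 ht, (h.wx_bdry hT ht).1, inner3]
  · simp [h.p1 ht, (h.wx_bdry hT ht).2, inner3]

lemma IsSol.bal3 (h : IsSol T u) (hT : 0 < T) {t : ℝ} (ht : t ∈ Icc (0:ℝ) T) :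
    HasDerivAt (fun t => ∫ x in (0:ℝ)..1, ‖DX (DT u) x t‖ ^ 2)
      (∫ x in (0:ℝ)..1, 2 * inner ℝ (DX (DT u) x t) (cross3 (DT u x t) (DX (DX (DX u)) x t))) t := by
  have hu := h.sm
  have hr := h.sm.smX.smX.smX
  have hw := h.sm.smT
  have hwx := hw.smX
  have hwxx := hwx.smX
  have c2 : Sm (fun _ _ => (2:ℝ)) := Sm.const
  have H1 := hwx.inner (hu.cross hwxx)
  have := balance (hwx.inner hwx) (c2.mul H1) (c2.mul (hwx.inner (hw.cross hr))) (t := t) ?_ ?_ ?_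
  · simpa [real_inner_self_eq_norm_sq] using this
  · intro x hx
    rw [DT_inner hwx hwx, DX_mul c2 H1, DX_const, DX_inner hwx (hu.cross hwxx), DX_cross hu hwxx,
      real_inner_comm (DX (DT u) x t) (DT (DX (DT u)) x t), h.wxt hT hx ht]
    simp only [inner_add_right]
    rw [id2, id3]
    ring
  · simp [(h.wx_bdry hT ht).1]
  · simp [(h.wx_bdry hT ht).2]

end facts

/-! ### Estimates -/

lemma sobolev {f : ℝ → ℝ → E3} (hf : Sm f) (t : ℝ) {ε : ℝ} (hε : 0 < ε) {x : ℝ}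
    (hx : x ∈ Icc (0:ℝ) 1) :
    ‖f x t‖ ^ 2 ≤ (1 + 1 / ε) * (∫ x in (0:ℝ)..1, ‖f x t‖ ^ 2)
      + ε * ∫ x in (0:ℝ)..1, ‖DX f x t‖ ^ 2 := by
  have cf := hf.contX t
  have cfx := hf.smX.contX t
  set k : ℝ → ℝ := fun y => ε * ‖DX f y t‖ ^ 2 + (1 / ε) * ‖f y t‖ ^ 2 with hk
  have ck : Continuous k := by fun_prop
  have k0 : ∀ y, 0 ≤ k y := fun y => by simp only [hk]; positivity
  set g' : ℝ → ℝ := fun y => inner ℝ (f y t) (DX f y t) + inner ℝ (DX f y t) (f y t) with hg'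
  have cg' : Continuous g' := by fun_prop
  have hb : ∀ y, |g' y| ≤ k y := by
    intro y
    have h1 : |inner ℝ (f y t) (DX f y t)| ≤ ‖f y t‖ * ‖DX f y t‖ := abs_real_inner_le_norm _ _
    have h2 : g' y = 2 * inner ℝ (f y t) (DX f y t) := by
      simp only [hg']; rw [real_inner_comm (f y t)]; ring
    rw [h2, abs_mul, abs_two]
    have h3 : k y - 2 * (‖f y t‖ * ‖DX f y t‖) = ε * (‖DX f y t‖ - ‖f y t‖ / ε) ^ 2 := by
      simp only [hk]; field_simp; ring
    have h4 : 0 ≤ ε * (‖DX f y t‖ - ‖f y t‖ / ε) ^ 2 := by positivity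
    linarith
  have hd : ∀ y, HasDerivAt (fun y => ‖f y t‖ ^ 2) (g' y) y := by
    intro y
    have := (hf.dX y t).inner ℝ (hf.dX y t)
    simpa only [real_inner_self_eq_norm_sq] using this
  have hint : ∀ a ∈ Icc (0:ℝ) 1, ∀ b ∈ Icc (0:ℝ) 1, a ≤ b →
      |‖f b t‖ ^ 2 - ‖f a t‖ ^ 2| ≤ ∫ y in (0:ℝ)..1, k y := by
    intro a ha b hb' hab
    rw [← intervalIntegral.integral_eq_sub_of_hasDerivAt (fun y _ => hd y)
      (cg'.intervalIntegrable _ _)]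
    calc |∫ y in a..b, g' y| ≤ ∫ y in a..b, |g' y| :=
          intervalIntegral.abs_integral_le_integral_abs hab
      _ ≤ ∫ y in a..b, k y := intervalIntegral.integral_mono_on hab
          (cg'.abs.intervalIntegrable _ _) (ck.intervalIntegrable _ _) (fun y _ => hb y)
      _ ≤ _ := intervalIntegral.integral_mono_interval ha.1 hab hb'.2
          (Filter.Eventually.of_forall k0) (ck.intervalIntegrable _ _)
  have hpt : ∀ y ∈ Icc (0:ℝ) 1, ‖f x t‖ ^ 2 ≤ ‖f y t‖ ^ 2 + ∫ y in (0:ℝ)..1, k y := by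
    intro y hy
    rcases le_total x y with hxy | hxy
    · have := abs_le.1 (hint x hx y hy hxy); linarith
    · have := abs_le.1 (hint y hy x hx hxy); linarith
  have h1 := intervalIntegral.integral_mono_on (zero_le_one) (f := fun _ => ‖f x t‖ ^ 2)
    (g := fun y => ‖f y t‖ ^ 2 + ∫ y in (0:ℝ)..1, k y) (μ := volume)
    intervalIntegrable_const ((by fun_prop : Continuous _).intervalIntegrable _ _) hpt
  rw [intervalIntegral.integral_add ((by fun_prop : Continuous _).intervalIntegrable _ _)
    intervalIntegrable_const] at h1
  simp only [intervalIntegral.integral_const, sub_zero, one_smul, hk] at h1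
  rw [intervalIntegral.integral_add ((by fun_prop : Continuous _).intervalIntegrable _ _)
    ((by fun_prop : Continuous _).intervalIntegrable _ _), intervalIntegral.integral_const_mul,
    intervalIntegral.integral_const_mul] at h1
  linarith

lemma id4 (u w y r : E3) : inner ℝ u u * inner ℝ y (cross3 w r)
    = inner ℝ u r * inner ℝ y (cross3 w u) - (inner ℝ u y * inner ℝ w (cross3 u r)
      - inner ℝ y (cross3 u r) * inner ℝ u w) := by
  simp only [inner3, cross3_0, cross3_1, cross3_2]; ring

lemma abs_inner_cross (a b c : E3) : |inner ℝ a (cross3 b c)| ≤ ‖a‖ * (‖b‖ * ‖c‖) :=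
  (abs_real_inner_le_norm _ _).trans (by gcongr; exact norm_cross_le _ _)

lemma S_alg {K p q w y s : ℝ} (hK : 1 ≤ K) (hp : 0 ≤ p) (hw : 0 ≤ w) (hy : 0 ≤ y)
    (hpK : p ^ 2 ≤ K) (hq : q ≤ w + K)
    (hs : s ≤ 3 * (p * q) * (y * w) + p * w * (w * y + w * (p * q))) :
    2 * s ≤ 8 * K ^ 2 * (y ^ 2 + (w ^ 2) ^ 2 + w ^ 2) := by
  have hpK' : p ≤ K := by nlinarith
  have h1 : p * q ≤ K * (w + K) := by
    calc p * q ≤ p * (w + K) := by gcongr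
      _ ≤ _ := by gcongr
  have h2 : p * (p * q) ≤ K * (w + K) := by
    calc p * (p * q) ≤ p * (p * (w + K)) := by gcongr
      _ = p ^ 2 * (w + K) := by ring
      _ ≤ _ := by gcongr
  have hKK : K * (w + K) ≤ K ^ 2 * (w + 1) := by nlinarith [mul_nonneg hw (by linarith : 0 ≤ K - 1)]
  have hK2 : K ≤ K ^ 2 := by nlinarith
  have h3 : s ≤ K ^ 2 * (3 * (w + 1) * (y * w) + w ^ 2 * y + w ^ 2 * (w + 1)) := by
    calc s ≤ 3 * (p * q) * (y * w) + p * w * (w * y + w * (p * q)) := hs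
      _ = 3 * (p * q) * (y * w) + p * (w ^ 2 * y) + w ^ 2 * (p * (p * q)) := by ring
      _ ≤ 3 * (K ^ 2 * (w + 1)) * (y * w) + K ^ 2 * (w ^ 2 * y) + w ^ 2 * (K ^ 2 * (w + 1)) := by
        have m1 := mul_le_mul_of_nonneg_right (h1.trans hKK) (mul_nonneg hy hw)
        have m2 := mul_le_mul_of_nonneg_right (hpK'.trans hK2) (mul_nonneg (sq_nonneg w) hy)
        have m3 := mul_le_mul_of_nonneg_left (h2.trans hKK) (sq_nonneg w)
        linarith
      _ = _ := by ring
  have h4 : 3 * (w + 1) * (y * w) + w ^ 2 * y + w ^ 2 * (w + 1)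
      ≤ 4 * (y ^ 2 + (w ^ 2) ^ 2 + w ^ 2) := by
    nlinarith [sq_nonneg (w ^ 2 - y), sq_nonneg (w - y), sq_nonneg (w ^ 2 - w), sq_nonneg y,
      sq_nonneg w, sq_nonneg (w ^ 2)]
  have h5 := mul_le_mul_of_nonneg_left h4 (sq_nonneg K)
  linarith

lemma gron {F F' : ℝ → ℝ} {a b T : ℝ}
    (hd : ∀ t ∈ Icc (0:ℝ) T, HasDerivAt F (F' t) t)
    (hle : ∀ t ∈ Icc (0:ℝ) T, F' t ≤ a * (F t + b)) :
    ∀ t ∈ Icc (0:ℝ) T, F t + b ≤ (F 0 + b) * Real.exp (a * t) := by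
  intro t ht
  have hg : ∀ s ∈ Icc (0:ℝ) T, HasDerivAt (fun s => (F s + b) * Real.exp (-a * s))
      ((F' s - a * (F s + b)) * Real.exp (-a * s)) s := by
    intro s hs
    have h1 := ((hasDerivAt_id s).const_mul (-a)).exp
    refine (((hd s hs).add_const b).mul h1).congr_deriv ?_
    simp; ring
  have hanti : AntitoneOn (fun s => (F s + b) * Real.exp (-a * s)) (Icc 0 T) := by
    refine antitoneOn_of_deriv_nonpos (convex_Icc 0 T)
      (fun s hs => (hg s hs).continuousAt.continuousWithinAt)
      (fun s hs => (hg s (interior_subset hs)).differentiableAt.differentiableWithinAt) ?_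
    intro s hs
    rw [(hg s (interior_subset hs)).deriv]
    have := hle s (interior_subset hs)
    exact mul_nonpos_of_nonpos_of_nonneg (by linarith) (Real.exp_pos _).le
  have h2 := hanti (left_mem_Icc.2 (ht.1.trans ht.2)) ht ht.1
  simp only [mul_zero, Real.exp_zero, mul_one] at h2
  have h3 : Real.exp (-a * t) * Real.exp (a * t) = 1 := by rw [← Real.exp_add]; simp
  have h4 := mul_le_mul_of_nonneg_right h2 (Real.exp_pos (a * t)).le
  rwa [mul_assoc, h3, mul_one] at h4

section est
variable {T : ℝ} {u : ℝ → ℝ → E3}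

lemma IsSol.normw (h : IsSol T u) {x t : ℝ} (hx : x ∈ Icc (0:ℝ) 1) (ht : t ∈ Icc (0:ℝ) T) :
    ‖DX (DX u) x t‖ ^ 2 = ‖DT u x t‖ ^ 2 + (‖DX u x t‖ ^ 2) ^ 2 := by
  have h1 := h.uq hx ht
  rw [real_inner_self_eq_norm_sq] at h1
  rw [h.w hx ht, normsq_cross, h.2.1 x hx t ht, eq_neg_of_add_eq_zero_left h1]; ring

lemma IsSol.normr (h : IsSol T u) {x t : ℝ} (hx : x ∈ Icc (0:ℝ) 1) (ht : t ∈ Icc (0:ℝ) T) :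
    ‖DX (DX (DX u)) x t‖ ^ 2 ≤ 2 * ‖DX (DT u) x t‖ ^ 2
      + 11 * (‖DX u x t‖ ^ 2 * ‖DX (DX u) x t‖ ^ 2) := by
  have h1 := normsq_cross (u x t) (DX (DX (DX u)) x t)
  rw [h.2.1 x hx t ht, h.ur hx ht, eq_sub_of_add_eq' (h.wx hx ht).symm] at h1
  have h2 := norm_sub_le (DX (DT u) x t) (cross3 (DX u x t) (DX (DX u) x t))
  have h3 := norm_cross_le (DX u x t) (DX (DX u) x t)
  have h4 := abs_real_inner_le_norm (DX u x t) (DX (DX u) x t)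
  have h5 : (inner ℝ (DX u x t) (DX (DX u) x t)) ^ 2 ≤ (‖DX u x t‖ * ‖DX (DX u) x t‖) ^ 2 :=
    sq_le_sq.2 (by rwa [abs_of_nonneg (by positivity : 0 ≤ ‖DX u x t‖ * ‖DX (DX u) x t‖)])
  have h6 : ‖DX (DT u) x t - cross3 (DX u x t) (DX (DX u) x t)‖ ^ 2
      ≤ (‖DX (DT u) x t‖ + ‖DX u x t‖ * ‖DX (DX u) x t‖) ^ 2 := by
    gcongr; linarith
  nlinarith [sq_nonneg (‖DX (DT u) x t‖ - ‖DX u x t‖ * ‖DX (DX u) x t‖)]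

lemma IsSol.normwx (h : IsSol T u) {x t : ℝ} (hx : x ∈ Icc (0:ℝ) 1) (ht : t ∈ Icc (0:ℝ) T) :
    ‖DX (DT u) x t‖ ^ 2 ≤ 2 * (‖DX u x t‖ ^ 2 * ‖DX (DX u) x t‖ ^ 2)
      + 2 * ‖DX (DX (DX u)) x t‖ ^ 2 := by
  have h2 := norm_add_le (cross3 (DX u x t) (DX (DX u) x t)) (cross3 (u x t) (DX (DX (DX u)) x t))
  rw [← h.wx hx ht] at h2
  have h3 := norm_cross_le (DX u x t) (DX (DX u) x t)
  have h4 := norm_cross_le (u x t) (DX (DX (DX u)) x t)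
  rw [h.2.1 x hx t ht] at h4
  have h6 : ‖DX (DT u) x t‖ ^ 2
      ≤ (‖DX u x t‖ * ‖DX (DX u) x t‖ + ‖DX (DX (DX u)) x t‖) ^ 2 := by
    gcongr; linarith
  nlinarith [sq_nonneg (‖DX u x t‖ * ‖DX (DX u) x t‖ - ‖DX (DX (DX u)) x t‖)]

lemma IsSol.Sbound (h : IsSol T u) {x t K : ℝ} (hx : x ∈ Icc (0:ℝ) 1) (ht : t ∈ Icc (0:ℝ) T)
    (hK : 1 ≤ K) (hp : ‖DX u x t‖ ^ 2 ≤ K) :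
    2 * inner ℝ (DX (DT u) x t) (cross3 (DT u x t) (DX (DX (DX u)) x t))
      ≤ 8 * K ^ 2 * (‖DX (DT u) x t‖ ^ 2 + (‖DT u x t‖ ^ 2) ^ 2 + ‖DT u x t‖ ^ 2) := by
  refine S_alg (p := ‖DX u x t‖) (q := ‖DX (DX u) x t‖) hK (norm_nonneg _) (norm_nonneg _)
    (norm_nonneg _) hp ?_ ?_
  · refine abs_le_of_sq_le_sq' (a := ‖DX (DX u) x t‖) ?_ (by positivity) |>.2
    rw [h.normw hx ht]
    have : (‖DX u x t‖ ^ 2) ^ 2 ≤ K ^ 2 := by gcongr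
    nlinarith [norm_nonneg (DT u x t)]
  · have e := id4 (u x t) (DT u x t) (DX (DT u) x t) (DX (DX (DX u)) x t)
    rw [h.uu hx ht, h.uw hx ht, h.ur hx ht, h.uwx hx ht, one_mul,
      eq_sub_of_add_eq' (h.wx hx ht).symm, inner_sub_right] at e
    rw [e]
    have a1 := abs_real_inner_le_norm (DX u x t) (DX (DX u) x t)
    have a2 := abs_inner_cross (DX (DT u) x t) (DT u x t) (u x t)
    rw [h.2.1 x hx t ht, mul_one] at a2
    have a3 := abs_real_inner_le_norm (DX u x t) (DT u x t)
    have a4 := abs_real_inner_le_norm (DT u x t) (DX (DT u) x t)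
    have a5 := abs_inner_cross (DT u x t) (DX u x t) (DX (DX u) x t)
    generalize (inner ℝ (DX u x t) (DX (DX u) x t) : ℝ) = i1 at *
    generalize (inner ℝ (DX (DT u) x t) (cross3 (DT u x t) (u x t)) : ℝ) = i2 at *
    generalize (inner ℝ (DX u x t) (DT u x t) : ℝ) = i3 at *
    generalize (inner ℝ (DT u x t) (DX (DT u) x t) : ℝ) = i4 at *
    generalize (inner ℝ (DT u x t) (cross3 (DX u x t) (DX (DX u) x t)) : ℝ) = i5 at *
    have b1 : -3 * i1 * i2 ≤ 3 * |i1| * |i2| := by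
      have := neg_abs_le (i1 * i2)
      rw [abs_mul] at this; linarith
    have b2 : i3 * (i4 - i5) ≤ |i3| * (|i4| + |i5|) := by
      refine (le_abs_self _).trans ?_
      rw [abs_mul]; gcongr; exact abs_sub _ _
    calc _ = -3 * i1 * i2 + i3 * (i4 - i5) := by ring
      _ ≤ 3 * |i1| * |i2| + |i3| * (|i4| + |i5|) := add_le_add b1 b2
      _ ≤ _ := by gcongr

end est

lemma Hsq3_eq (u : ℝ → ℝ → E3) (t : ℝ) : Hsq 3 (fun x => u x t)
    = (∫ x in (0:ℝ)..1, ‖u x t‖ ^ 2) + (∫ x in (0:ℝ)..1, ‖DX u x t‖ ^ 2)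
      + (∫ x in (0:ℝ)..1, ‖DX (DX u) x t‖ ^ 2) + ∫ x in (0:ℝ)..1, ‖DX (DX (DX u)) x t‖ ^ 2 := by
  simp only [Hsq, Finset.sum_range_succ, Finset.sum_range_zero, zero_add]
  rfl

lemma Hsq1_eq (u : ℝ → ℝ → E3) (t : ℝ) : Hsq 1 (fun x => pdt u x t)
    = (∫ x in (0:ℝ)..1, ‖DT u x t‖ ^ 2) + ∫ x in (0:ℝ)..1, ‖DX (DT u) x t‖ ^ 2 := by
  simp only [Hsq, Finset.sum_range_succ, Finset.sum_range_zero, zero_add]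
  rfl

lemma int_nonneg (f : ℝ → E3) : 0 ≤ ∫ x in (0:ℝ)..1, ‖f x‖ ^ 2 :=
  intervalIntegral.integral_nonneg zero_le_one (fun _ _ => by positivity)

lemma int_mono {f g : ℝ → ℝ} (hf : Continuous f) (hg : Continuous g)
    (h : ∀ x ∈ Icc (0:ℝ) 1, f x ≤ g x) : ∫ x in (0:ℝ)..1, f x ≤ ∫ x in (0:ℝ)..1, g x :=
  intervalIntegral.integral_mono_on zero_le_one (hf.intervalIntegrable _ _)
    (hg.intervalIntegrable _ _) h

lemma int_add {f g : ℝ → ℝ} (hf : Continuous f) (hg : Continuous g) :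
    ∫ x in (0:ℝ)..1, (f x + g x) = (∫ x in (0:ℝ)..1, f x) + ∫ x in (0:ℝ)..1, g x :=
  intervalIntegral.integral_add (hf.intervalIntegrable _ _) (hg.intervalIntegrable _ _)

lemma int_sub {f g : ℝ → ℝ} (hf : Continuous f) (hg : Continuous g) :
    ∫ x in (0:ℝ)..1, (f x - g x) = (∫ x in (0:ℝ)..1, f x) - ∫ x in (0:ℝ)..1, g x :=
  intervalIntegral.integral_sub (hf.intervalIntegrable _ _) (hg.intervalIntegrable _ _)

lemma const_of {f : ℝ → ℝ} {T : ℝ} (h : ∀ t ∈ Icc (0:ℝ) T, HasDerivAt f 0 t) :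
    ∀ t ∈ Icc (0:ℝ) T, f t = f 0 :=
  constant_of_has_deriv_right_zero (fun t ht => (h t ht).continuousAt.continuousWithinAt)
    (fun t ht => (h t (Ico_subset_Icc_self ht)).hasDerivWithinAt)

def KK (N : ℝ) : ℝ := 2 * N + 3 * N ^ 2 * (4 * N + 5) + 2 * N + 1

section main
variable {T : ℝ} {u : ℝ → ℝ → E3}

lemma IsSol.Xeq (h : IsSol T u) {t : ℝ} (ht : t ∈ Icc (0:ℝ) T) :
    ∫ x in (0:ℝ)..1, ‖DX (DX u) x t‖ ^ 2 = (∫ x in (0:ℝ)..1, ‖DT u x t‖ ^ 2)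
      + ∫ x in (0:ℝ)..1, (‖DX u x t‖ ^ 2) ^ 2 := by
  have cw := h.sm.smT.contX t
  have cp := h.sm.smX.contX t
  rw [← int_add (by fun_prop) (by fun_prop)]
  refine intervalIntegral.integral_congr fun x hx => ?_
  rw [uIcc_of_le zero_le_one] at hx
  exact h.normw hx ht

lemma IsSol.second (h : IsSol T u) (hT : 0 < T) {N : ℝ}
    (hE : ∫ x in (0:ℝ)..1, ‖DX u x 0‖ ^ 2 ≤ N)
    (hX : ∫ x in (0:ℝ)..1, ‖DX (DX u) x 0‖ ^ 2 ≤ N) {t : ℝ} (ht : t ∈ Icc (0:ℝ) T) :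
    (∫ x in (0:ℝ)..1, ‖DX u x t‖ ^ 2) ≤ N ∧ (∫ x in (0:ℝ)..1, ‖DX (DX u) x t‖ ^ 2) ≤ KK N ∧
    (∫ x in (0:ℝ)..1, ‖DT u x t‖ ^ 2) ≤ KK N ∧ ∀ x ∈ Icc (0:ℝ) 1, ‖DX u x t‖ ^ 2 ≤ KK N := by
  have cw := h.sm.smT.contX
  have cp := h.sm.smX.contX
  have h0 : (0:ℝ) ∈ Icc (0:ℝ) T := left_mem_Icc.2 hT.le
  have hN : 0 ≤ N := (int_nonneg _).trans hE
  have hEt : (∫ x in (0:ℝ)..1, ‖DX u x t‖ ^ 2) ≤ N := by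
    have := const_of (fun t ht => h.bal1 ht) t ht
    rw [this]; exact hE
  have e2 := const_of (fun t ht => h.bal2 hT ht) t ht
  have cpt := cp t
  have cp0 := cp 0
  have cwt := cw t
  have cw0 := cw 0
  rw [int_sub (by fun_prop) (by fun_prop), int_sub (by fun_prop) (by fun_prop),
    intervalIntegral.integral_const_mul, intervalIntegral.integral_const_mul] at e2
  have X0 := h.Xeq h0
  have Xt := h.Xeq ht
  have P0 : 0 ≤ ∫ x in (0:ℝ)..1, (‖DX u x 0‖ ^ 2) ^ 2 :=
    intervalIntegral.integral_nonneg zero_le_one (fun _ _ => by positivity)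
  have Pt : 0 ≤ ∫ x in (0:ℝ)..1, (‖DX u x t‖ ^ 2) ^ 2 :=
    intervalIntegral.integral_nonneg zero_le_one (fun _ _ => by positivity)
  have E0 := int_nonneg (fun x => DX u x t)
  have Xp := int_nonneg (fun x => DX (DX u) x t)
  have W0 := int_nonneg (fun x => DT u x t)
  have Pb : ∫ x in (0:ℝ)..1, (‖DX u x t‖ ^ 2) ^ 2 ≤
      (1/4) * (∫ x in (0:ℝ)..1, ‖DX (DX u) x t‖ ^ 2) + N ^ 2 * (4 * N + 5) := by
    have hε : 0 < 1 / (4 * (N + 1)) := by positivity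
    set B := (1 + 1 / (1 / (4 * (N + 1)))) * (∫ x in (0:ℝ)..1, ‖DX u x t‖ ^ 2)
      + 1 / (4 * (N + 1)) * ∫ x in (0:ℝ)..1, ‖DX (DX u) x t‖ ^ 2 with hB
    have hB0 : 0 ≤ B := by positivity
    have s1 : ∫ x in (0:ℝ)..1, (‖DX u x t‖ ^ 2) ^ 2 ≤ ∫ x in (0:ℝ)..1, B * ‖DX u x t‖ ^ 2 := by
      refine int_mono (by fun_prop) (by fun_prop) fun x hx => ?_
      rw [sq (‖DX u x t‖ ^ 2)]
      exact mul_le_mul_of_nonneg_right (sobolev h.sm.smX t hε hx) (by positivity)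
    rw [intervalIntegral.integral_const_mul] at s1
    have s2 : B ≤ (4 * N + 5) * N
        + 1 / (4 * (N + 1)) * ∫ x in (0:ℝ)..1, ‖DX (DX u) x t‖ ^ 2 := by
      have : 1 + 1 / (1 / (4 * (N + 1))) = 4 * N + 5 := by rw [one_div_one_div]; ring
      rw [hB, this]; gcongr
    have s3 : N * (1 / (4 * (N + 1))) ≤ 1 / 4 := by
      rw [mul_one_div, div_le_iff₀ (by positivity)]; linarith
    calc _ ≤ B * ∫ x in (0:ℝ)..1, ‖DX u x t‖ ^ 2 := s1
      _ ≤ B * N := by gcongr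
      _ ≤ ((4 * N + 5) * N
        + 1 / (4 * (N + 1)) * ∫ x in (0:ℝ)..1, ‖DX (DX u) x t‖ ^ 2) * N := by gcongr
      _ = (N * (1 / (4 * (N + 1)))) * (∫ x in (0:ℝ)..1, ‖DX (DX u) x t‖ ^ 2)
          + N ^ 2 * (4 * N + 5) := by ring
      _ ≤ _ := by gcongr
  have hc : 0 ≤ N ^ 2 * (4 * N + 5) := by positivity
  have hXt : (∫ x in (0:ℝ)..1, ‖DX (DX u) x t‖ ^ 2) ≤ 2 * N + 3 * N ^ 2 * (4 * N + 5) := by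
    linarith
  refine ⟨hEt, ?_, ?_, ?_⟩
  · unfold KK; linarith
  · unfold KK; linarith
  · intro x hx
    have := sobolev h.sm.smX t one_pos hx
    unfold KK; linarith

lemma IsSol.third (h : IsSol T u) (hT : 0 < T) {N : ℝ}
    (hE : ∫ x in (0:ℝ)..1, ‖DX u x 0‖ ^ 2 ≤ N)
    (hX : ∫ x in (0:ℝ)..1, ‖DX (DX u) x 0‖ ^ 2 ≤ N)
    (hR : ∫ x in (0:ℝ)..1, ‖DX (DX (DX u)) x 0‖ ^ 2 ≤ N) {t : ℝ} (ht : t ∈ Icc (0:ℝ) T) :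
    (∫ x in (0:ℝ)..1, ‖DX (DT u) x t‖ ^ 2) ≤ (2 * KK N * N + 2 * N + 2 * KK N)
      * Real.exp (8 * KK N ^ 2 * (1 + KK N) * T) := by
  have hN : 0 ≤ N := (int_nonneg _).trans hE
  have hK1 : 1 ≤ KK N := by
    have : 0 ≤ 2 * N + 3 * N ^ 2 * (4 * N + 5) + 2 * N := by positivity
    unfold KK; linarith
  have h0 : (0:ℝ) ∈ Icc (0:ℝ) T := left_mem_Icc.2 hT.le
  have hsec := fun {t} (ht : t ∈ Icc (0:ℝ) T) => h.second hT hE hX ht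
  generalize KK N = K at *
  have g := gron (b := 2 * K) (a := 8 * K ^ 2 * (1 + K)) (fun t ht => h.bal3 hT ht) (fun t ht => by
    obtain ⟨-, -, hW, hp⟩ := hsec ht
    have cw := h.sm.smT.contX t
    have cwx := h.sm.smT.smX.contX t
    have cS := (h.sm.smT.smX.inner (h.sm.smT.cross h.sm.smX.smX.smX)).contX t
    have W0 := int_nonneg (fun x => DT u x t)
    have F0 := int_nonneg (fun x => DX (DT u) x t)
    have s1 := int_mono (by fun_prop) (by fun_prop)
      (fun x hx => h.Sbound hx ht hK1 (hp x hx))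
    rw [intervalIntegral.integral_const_mul (8 * K ^ 2), int_add (by fun_prop) (by fun_prop),
      int_add (by fun_prop) (by fun_prop)] at s1
    refine s1.trans ?_
    have s2 : ∫ x in (0:ℝ)..1, (‖DT u x t‖ ^ 2) ^ 2 ≤
        (2 * K + ∫ x in (0:ℝ)..1, ‖DX (DT u) x t‖ ^ 2) * K := by
      calc _ ≤ ∫ x in (0:ℝ)..1, (2 * K + ∫ x in (0:ℝ)..1, ‖DX (DT u) x t‖ ^ 2) * ‖DT u x t‖ ^ 2 := by
            refine int_mono (by fun_prop) (by fun_prop) fun x hx => ?_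
            rw [sq (‖DT u x t‖ ^ 2)]
            have := sobolev h.sm.smT t one_pos hx
            exact mul_le_mul_of_nonneg_right (by linarith) (by positivity)
        _ ≤ _ := by
            rw [intervalIntegral.integral_const_mul]
            gcongr
    rw [mul_assoc (8 * K ^ 2)]
    refine mul_le_mul_of_nonneg_left ?_ (by positivity)
    nlinarith) t ht
  have F0 : (∫ x in (0:ℝ)..1, ‖DX (DT u) x 0‖ ^ 2) ≤ 2 * K * N + 2 * N := by
    have cwx := h.sm.smT.smX.contX 0
    have cq := h.sm.smX.smX.contX 0
    have cr := h.sm.smX.smX.smX.contX 0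
    obtain ⟨-, -, -, hp⟩ := hsec h0
    calc _ ≤ ∫ x in (0:ℝ)..1, (2 * K * ‖DX (DX u) x 0‖ ^ 2 + 2 * ‖DX (DX (DX u)) x 0‖ ^ 2) := by
          refine int_mono (by fun_prop) (by fun_prop) fun x hx => ?_
          have h1 := h.normwx hx h0
          have h2 := mul_le_mul_of_nonneg_right (hp x hx) (sq_nonneg ‖DX (DX u) x 0‖)
          linarith
      _ = 2 * K * (∫ x in (0:ℝ)..1, ‖DX (DX u) x 0‖ ^ 2)
          + 2 * ∫ x in (0:ℝ)..1, ‖DX (DX (DX u)) x 0‖ ^ 2 := by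
          rw [int_add (by fun_prop) (by fun_prop), intervalIntegral.integral_const_mul,
            intervalIntegral.integral_const_mul]
      _ ≤ _ := by gcongr
  have hexp : Real.exp (8 * K ^ 2 * (1 + K) * t) ≤ Real.exp (8 * K ^ 2 * (1 + K) * T) := by
    apply Real.exp_le_exp.2
    exact mul_le_mul_of_nonneg_left ht.2 (by positivity)
  have F00 := int_nonneg (fun x => DX (DT u) x 0)
  calc _ ≤ ((∫ x in (0:ℝ)..1, ‖DX (DT u) x 0‖ ^ 2) + 2 * K)
        * Real.exp (8 * K ^ 2 * (1 + K) * t) := by linarith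
    _ ≤ _ := by gcongr

end main

theorem H3_estimate_schrodinger_flow :
    ∃ C : ℝ → ℝ → ℝ, ∀ T > (0:ℝ), ∀ u : ℝ → ℝ → E3, IsSol T u →
      ∀ t ∈ Icc (0:ℝ) T,
        Hsq 3 (fun x => u x t) + Hsq 1 (fun x => pdt u x t)
          ≤ C (Real.sqrt (Hsq 3 (fun x => u x 0))) T := by
  refine ⟨fun s T => 1 + s ^ 2 + 2 * KK (s ^ 2) + 11 * KK (s ^ 2) * KK (s ^ 2)
    + 3 * ((2 * KK (s ^ 2) * s ^ 2 + 2 * s ^ 2 + 2 * KK (s ^ 2))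
      * Real.exp (8 * KK (s ^ 2) ^ 2 * (1 + KK (s ^ 2)) * T)), ?_⟩
  intro T hT u h t ht
  have i0 := int_nonneg (fun x => u x 0)
  have i1 := int_nonneg (fun x => DX u x 0)
  have i2 := int_nonneg (fun x => DX (DX u) x 0)
  have i3 := int_nonneg (fun x => DX (DX (DX u)) x 0)
  have hN := Hsq3_eq u 0
  have hN0 : 0 ≤ Hsq 3 (fun x => u x 0) := by linarith
  simp only [Real.sq_sqrt hN0]
  generalize Hsq 3 (fun x => u x 0) = N at *
  have hE : ∫ x in (0:ℝ)..1, ‖DX u x 0‖ ^ 2 ≤ N := by linarith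
  have hX : ∫ x in (0:ℝ)..1, ‖DX (DX u) x 0‖ ^ 2 ≤ N := by linarith
  have hR : ∫ x in (0:ℝ)..1, ‖DX (DX (DX u)) x 0‖ ^ 2 ≤ N := by linarith
  have hF := h.third hT hE hX hR ht
  obtain ⟨hEt, hXt, hWt, hp⟩ := h.second hT hE hX ht
  have hU : ∫ x in (0:ℝ)..1, ‖u x t‖ ^ 2 = 1 := by
    rw [intervalIntegral.integral_congr (g := fun _ => (1:ℝ))]
    · simp
    · intro x hx
      rw [uIcc_of_le zero_le_one] at hx
      simp [h.2.1 x hx t ht]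
  have hK0 : 0 ≤ KK N := (int_nonneg _).trans hXt
  have cwx := h.sm.smT.smX.contX t
  have cq := h.sm.smX.smX.contX t
  have cr := h.sm.smX.smX.smX.contX t
  have hRt : ∫ x in (0:ℝ)..1, ‖DX (DX (DX u)) x t‖ ^ 2 ≤
      2 * (∫ x in (0:ℝ)..1, ‖DX (DT u) x t‖ ^ 2) + 11 * KK N * KK N := by
    calc _ ≤ ∫ x in (0:ℝ)..1, (2 * ‖DX (DT u) x t‖ ^ 2 + 11 * KK N * ‖DX (DX u) x t‖ ^ 2) := by
          refine int_mono (by fun_prop) (by fun_prop) fun x hx => ?_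
          have h1 := h.normr hx ht
          have h2 := mul_le_mul_of_nonneg_right (hp x hx) (sq_nonneg ‖DX (DX u) x t‖)
          linarith
      _ = 2 * (∫ x in (0:ℝ)..1, ‖DX (DT u) x t‖ ^ 2)
          + 11 * KK N * ∫ x in (0:ℝ)..1, ‖DX (DX u) x t‖ ^ 2 := by
          rw [int_add (by fun_prop) (by fun_prop), intervalIntegral.integral_const_mul,
            intervalIntegral.integral_const_mul]
      _ ≤ _ := by gcongr
  rw [Hsq3_eq, Hsq1_eq, hU]
  linarith

end
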